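/- arXiv:2107.01394 — 4 statements merged into one kernel-verified Lean document; each statement's English description precedes it below -/
import Mathlib

section
/- Let r_U, r_V, r_X, r_Y be real-valued functions with r_U, r_V, r_X twice-differentiable on (−∞,0) and r_Y twice-differentiable on (0,∞), satisfying r_U(x−y) + r_V(−y) = r_X(x) + r_Y(y) for all x < 0 and y > 0. Then there exist real constants a₄, a₅, a₆ such that r_U(u) = a₄u + a₅ for all u < 0 and r_X(x) = a₄x + a₆ for all x < 0. -/
open Set

theorem affine_of_deriv_const (f : ℝ → ℝ) (a : ℝ)
    (h : ∀ t : ℝ, t < 0 → HasDerivAt f a t) :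
    ∀ u : ℝ, u < 0 → f u = a * u + (f (-1) + a) := by
  intro u hu
  have hd : ∀ t : ℝ, t < 0 → HasDerivAt (fun s => f s - a * s) 0 t := by
    intro t ht
    have h2 := (h t ht).sub ((hasDerivAt_id t).const_mul a)
    rw [mul_one, sub_self] at h2
    exact h2
  have key := isOpen_Iio.is_const_of_deriv_eq_zero (s := Iio (0:ℝ))
    (f := fun s => f s - a * s) (convex_Iio (0:ℝ)).isPreconnected
    (fun t ht => (hd t ht).differentiableAt.differentiableWithinAt)
    (fun t ht => (hd t ht).deriv) (show u ∈ Iio (0:ℝ) from hu)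
    (show (-1:ℝ) ∈ Iio (0:ℝ) by norm_num)
  linarith

theorem al_region2_functional_equation
    (rU rV rX rY : ℝ → ℝ)
    (hU : ∀ t ∈ Iio (0 : ℝ), DifferentiableAt ℝ rU t ∧ DifferentiableAt ℝ (deriv rU) t)
    (hV : ∀ t ∈ Iio (0 : ℝ), DifferentiableAt ℝ rV t ∧ DifferentiableAt ℝ (deriv rV) t)
    (hX : ∀ t ∈ Iio (0 : ℝ), DifferentiableAt ℝ rX t ∧ DifferentiableAt ℝ (deriv rX) t)
    (hY : ∀ t ∈ Ioi (0 : ℝ), DifferentiableAt ℝ rY t ∧ DifferentiableAt ℝ (deriv rY) t)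
    (heq : ∀ x y : ℝ, x < 0 → 0 < y → rU (x - y) + rV (-y) = rX x + rY y) :
    ∃ a₄ a₅ a₆ : ℝ,
      (∀ u : ℝ, u < 0 → rU u = a₄ * u + a₅) ∧
      (∀ x : ℝ, x < 0 → rX x = a₄ * x + a₆) := by
  have hUX : ∀ u x : ℝ, u < x → x < 0 → HasDerivAt rX (deriv rU u) x := by
    intro u x hux hx
    have hu : u < 0 := hux.trans hx
    have h1 : HasDerivAt rU (deriv rU u) (x - (x - u)) := by
      rw [sub_sub_cancel]
      exact (hU u hu).1.hasDerivAt
    have h2 := ((h1.comp_sub_const x (x - u)).add_const (rV (-(x - u)))).sub_const (rY (x - u))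
    refine h2.congr_of_eventuallyEq ?_
    filter_upwards [Iio_mem_nhds hx] with z hz
    have := heq z (x - u) hz (by linarith)
    linarith
  have hc : ∀ u : ℝ, u < 0 → deriv rU u = deriv rU (-1) := by
    intro u hu
    have hm : max u (-1) < 0 := max_lt hu (by norm_num)
    have h1 := le_max_left u (-1)
    have h2 := le_max_right u (-1)
    exact (hUX u (max u (-1) / 2) (by linarith) (by linarith)).unique
      (hUX (-1) (max u (-1) / 2) (by linarith) (by linarith))
  refine ⟨deriv rU (-1), _, _, affine_of_deriv_const rU _ ?_, affine_of_deriv_const rX _ ?_⟩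
  · intro t ht
    rw [← hc t ht]
    exact (hU t ht).1.hasDerivAt
  · intro t ht
    rw [← hc (t - 1) (by linarith)]
    exact hUX (t - 1) t (by linarith) ht
end

section
/- Let r_U be twice-differentiable on (0,∞), let r_V, r_X, r_Y be twice-differentiable on (−∞,0), and suppose r_U(x−y) + r_V(−x) = r_X(x) + r_Y(y) for all y < x < 0. Then there exist real constants a₇, a₈, a₉ such that r_U(u) = −a₇u + a₈ for all u > 0 and r_Y(y) = a₇y + a₉ for all y < 0. -/
open Set

theorem al_region4_functional_equation
    (rU rV rX rY : ℝ → ℝ)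
    (hU : ∀ t ∈ Ioi (0 : ℝ), DifferentiableAt ℝ rU t ∧ DifferentiableAt ℝ (deriv rU) t)
    (hV : ∀ t ∈ Iio (0 : ℝ), DifferentiableAt ℝ rV t ∧ DifferentiableAt ℝ (deriv rV) t)
    (hX : ∀ t ∈ Iio (0 : ℝ), DifferentiableAt ℝ rX t ∧ DifferentiableAt ℝ (deriv rX) t)
    (hY : ∀ t ∈ Iio (0 : ℝ), DifferentiableAt ℝ rY t ∧ DifferentiableAt ℝ (deriv rY) t)
    (heq : ∀ x y : ℝ, y < x → x < 0 → rU (x - y) + rV (-x) = rX x + rY y) :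
    ∃ a₇ a₈ a₉ : ℝ,
      (∀ u : ℝ, 0 < u → rU u = -a₇ * u + a₈) ∧
      (∀ y : ℝ, y < 0 → rY y = a₇ * y + a₉) := by
  have key : ∀ t y : ℝ, 0 < t → t < -y → deriv rU t = -deriv rY y := by
    intro t y ht hty
    have hx : t + y < 0 := by linarith
    have hy : y < 0 := by linarith
    have hU1 : HasDerivAt rU (deriv rU t) ((t + y) - y) := by
      have h := (hU t ht).1.hasDerivAt
      have e : (t + y) - y = t := by ring
      rw [e]
      exact h
    have h1 : HasDerivAt (fun z : ℝ => (t + y) - z) (-1) y := by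
      simpa using (hasDerivAt_id y).const_sub (t + y)
    have h2 : HasDerivAt (fun z : ℝ => rU ((t + y) - z)) (deriv rU t * (-1)) y :=
      HasDerivAt.comp y hU1 h1
    have h3 : HasDerivAt (fun z : ℝ => rX (t + y) - rV (-(t + y)) + rY z) (deriv rY y) y :=
      ((hY y hy).1.hasDerivAt).const_add _
    have h4 : (fun z : ℝ => rU ((t + y) - z)) =ᶠ[nhds y]
        (fun z : ℝ => rX (t + y) - rV (-(t + y)) + rY z) := by
      filter_upwards [Iio_mem_nhds (show y < t + y by linarith)] with z hz
      have := heq (t + y) z hz hx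
      linarith
    have := h2.unique (h3.congr_of_eventuallyEq h4)
    linarith
  have hYd : ∀ y : ℝ, y < 0 → deriv rY y = deriv rY (-1) := by
    intro y hy
    have hm : 0 < min (-y) 1 := lt_min (by linarith) one_pos
    have hl := min_le_left (-y) 1
    have hr := min_le_right (-y) 1
    have k1 := key (min (-y) 1 / 2) y (by linarith) (by linarith)
    have k2 := key (min (-y) 1 / 2) (-1) (by linarith) (by linarith)
    linarith
  have hUd : ∀ t : ℝ, 0 < t → deriv rU t = -deriv rY (-1) := by
    intro t ht
    rw [key t (-t - 1) ht (by linarith), hYd (-t - 1) (by linarith)]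
  generalize deriv rY (-1) = a at hYd hUd
  have dU : ∀ t ∈ Ioi (0 : ℝ), HasDerivAt (fun u => rU u + a * u) 0 t := by
    intro t ht
    have h := ((hU t ht).1.hasDerivAt).add ((hasDerivAt_id t).const_mul a)
    rw [hUd t ht] at h
    have e : -a + a * 1 = 0 := by ring
    rw [e] at h
    exact h
  have dY : ∀ t ∈ Iio (0 : ℝ), HasDerivAt (fun u => rY u - a * u) 0 t := by
    intro t ht
    have h := ((hY t ht).1.hasDerivAt).sub ((hasDerivAt_id t).const_mul a)
    rw [hYd t ht] at h
    have e : a - a * 1 = 0 := by ring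
    rw [e] at h
    exact h
  refine ⟨a, rU 1 + a * 1, rY (-1) - a * (-1), ?_, ?_⟩
  · intro u hu
    have := isOpen_Ioi.is_const_of_deriv_eq_zero isPreconnected_Ioi
      (fun t ht => (dU t ht).differentiableAt.differentiableWithinAt)
      (fun t ht => (dU t ht).deriv) (mem_Ioi.2 hu) (mem_Ioi.2 one_pos)
    linarith
  · intro y hy
    have := isOpen_Iio.is_const_of_deriv_eq_zero isPreconnected_Iio
      (fun t ht => (dY t ht).differentiableAt.differentiableWithinAt)
      (fun t ht => (dY t ht).deriv) (mem_Iio.2 hy) (mem_Iio.2 (show (-1 : ℝ) < 0 by norm_num))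
    linarith
end

section
/- Let c₁, c₂ > 0. Let r_U, r_V, r_X, r_Y be real-valued functions with r_V twice-differentiable on (−c₁,∞), r_Y twice-differentiable on (−c₂,∞), r_U twice-differentiable on (−c₂,c₁), and r_X twice-differentiable on (−c₁,c₂), and suppose r_U(−x) + r_V(y+2x) = r_X(x) + r_Y(y) for all (x,y) ∈ (−c₁,c₂) × (−c₂,∞) with x > −y. Then there exist real constants a₁, a₂, a₃ such that r_V(v) = a₁v + a₂ for all v ∈ (−c₁,∞) and r_Y(y) = a₁y + a₃ for all y ∈ (−c₂,∞). -/
open Set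

theorem aux_const (c : ℝ) (f : ℝ → ℝ) (hf : ∀ t ∈ Ioi c, DifferentiableAt ℝ f t)
    (hd : ∀ t ∈ Ioi c, deriv f t = 0) : ∀ t ∈ Ioi c, f t = f (c + 1) := by
  intro t ht
  exact isOpen_Ioi.is_const_of_deriv_eq_zero isPreconnected_Ioi
    (fun x hx => (hf x hx).differentiableWithinAt) (fun x hx => hd x hx) ht
    (by simp)

theorem aux_affine (c a : ℝ) (f : ℝ → ℝ) (hf : ∀ t ∈ Ioi c, DifferentiableAt ℝ f t)
    (hd : ∀ t ∈ Ioi c, deriv f t = a) : ∃ b, ∀ t ∈ Ioi c, f t = a * t + b := by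
  have key : ∀ t ∈ Ioi c, HasDerivAt (fun x => f x - a * x) 0 t := by
    intro t ht
    have h1 := (hf t ht).hasDerivAt
    rw [hd t ht] at h1
    have h2 := h1.sub ((hasDerivAt_id t).const_mul a)
    rw [mul_one, sub_self] at h2
    exact h2
  have h := aux_const c (fun x => f x - a * x) (fun t ht => (key t ht).differentiableAt)
    (fun t ht => (key t ht).deriv)
  refine ⟨f (c + 1) - a * (c + 1), fun t ht => ?_⟩
  have := h t ht
  linarith

theorem sExp_region1_functional_equation
    (c₁ c₂ : ℝ) (hc₁ : 0 < c₁) (hc₂ : 0 < c₂)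
    (rU rV rX rY : ℝ → ℝ)
    (hV : ∀ t ∈ Ioi (-c₁), DifferentiableAt ℝ rV t ∧ DifferentiableAt ℝ (deriv rV) t)
    (hY : ∀ t ∈ Ioi (-c₂), DifferentiableAt ℝ rY t ∧ DifferentiableAt ℝ (deriv rY) t)
    (hU : ∀ t ∈ Ioo (-c₂) c₁, DifferentiableAt ℝ rU t ∧ DifferentiableAt ℝ (deriv rU) t)
    (hX : ∀ t ∈ Ioo (-c₁) c₂, DifferentiableAt ℝ rX t ∧ DifferentiableAt ℝ (deriv rX) t)
    (heq : ∀ x y : ℝ, x ∈ Ioo (-c₁) c₂ → y ∈ Ioi (-c₂) → -y < x →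
      rU (-x) + rV (y + 2 * x) = rX x + rY y) :
    ∃ a₁ a₂ a₃ : ℝ,
      (∀ v ∈ Ioi (-c₁), rV v = a₁ * v + a₂) ∧
      (∀ y ∈ Ioi (-c₂), rY y = a₁ * y + a₃) := by
  have h1 : ∀ x y : ℝ, x ∈ Ioo (-c₁) c₂ → y ∈ Ioi (-c₂) → -y < x →
      deriv rV (y + 2 * x) = deriv rY y := by
    intro x y hx hy hxy
    have e : (fun z => rV (z + 2 * x)) =ᶠ[nhds y] fun z => rY z + (rX x - rU (-x)) := by
      have hxy' : y ∈ Ioi (-x) := by simp only [mem_Ioi]; linarith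
      filter_upwards [isOpen_Ioi.mem_nhds hy, isOpen_Ioi.mem_nhds hxy'] with z hz hz'
      simp only [mem_Ioi] at hz'
      have := heq x z hx hz (by linarith)
      linarith
    have := e.deriv_eq
    rwa [deriv_comp_add_const, deriv_add_const] at this
  have h2 : ∀ v ∈ Ioi (-c₁), deriv (deriv rV) v = 0 := by
    intro v hv
    simp only [mem_Ioi] at hv
    obtain ⟨x, hx1, hx2⟩ : ∃ x, -c₁ < x ∧ x < min (min v c₂) ((v + c₂) / 2) :=
      exists_between (by simp only [lt_min_iff]; refine ⟨⟨?_, ?_⟩, ?_⟩ <;> linarith)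
    simp only [lt_min_iff] at hx2
    obtain ⟨⟨hxv, hxc⟩, hxm⟩ := hx2
    have e : deriv rV =ᶠ[nhds v] fun _ => deriv rY (v - 2 * x) := by
      have hm : v ∈ Ioo (v - 2 * x + 2 * max (-c₁) (2 * x - v)) (v - 2 * x + 2 * c₂) := by
        have : max (-c₁) (2 * x - v) < x := max_lt hx1 (by linarith)
        constructor <;> linarith
      filter_upwards [isOpen_Ioo.mem_nhds hm] with w hw
      have l1 := le_max_left (-c₁) (2 * x - v)
      have l2 := le_max_right (-c₁) (2 * x - v)
      obtain ⟨hw1, hw2⟩ := hw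
      have := h1 ((w - (v - 2 * x)) / 2) (v - 2 * x) ⟨by linarith, by linarith⟩
        (by simp only [mem_Ioi]; linarith) (by linarith)
      rw [← this]
      congr 1
      ring
    rw [e.deriv_eq, deriv_const]
  have h3 := aux_const (-c₁) (deriv rV) (fun t ht => (hV t ht).2) h2
  obtain ⟨b, hb⟩ := aux_affine (-c₁) (deriv rV (-c₁ + 1)) rV (fun t ht => (hV t ht).1) h3
  obtain ⟨d, hd⟩ := aux_affine (-c₂) (deriv rV (-c₁ + 1)) rY (fun t ht => (hY t ht).1) (by
    intro y hy
    have hy' := hy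
    simp only [mem_Ioi] at hy'
    obtain ⟨x, hx1, hx2⟩ : ∃ x, max (-c₁) (-y) < x ∧ x < c₂ :=
      exists_between (max_lt (by linarith) (by linarith))
    obtain ⟨hxc, hxy⟩ := max_lt_iff.1 hx1
    rw [← h1 x y ⟨hxc, hx2⟩ hy hxy]
    exact h3 _ (by simp only [mem_Ioi]; linarith))
  exact ⟨_, b, d, hb, hd⟩
end

section
/- Let α, β ≥ 0 with α ≠ β, and let r_U, r_V : (0,∞) → ℝ be twice-differentiable functions satisfying, for all u, v > 0, (1 + 2βuv + αβu²v²)·u²·r_U''(u) + (1 + βuv)·2u·r_U'(u) = (1 + 2αuv + αβu²v²)·v²·r_V''(v) + (1 + αuv)·2v·r_V'(v). Then there exist real constants λ, c₁, c₂, b₂, b₃ such that r_U(u) = (λ−1)·ln u − c₂αu − c₁/u + b₂ for all u > 0 and r_V(v) = (λ−1)·ln v − c₁βv − c₂/v + b₃ for all v > 0. -/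
open Set

lemma gig_const (f : ℝ → ℝ) (h : ∀ t : ℝ, 0 < t → HasDerivAt f 0 t) :
    ∃ c, ∀ t : ℝ, 0 < t → f t = c := by
  refine ⟨f 1, fun t ht => ?_⟩
  have := (convex_Ioi (0:ℝ)).is_const_of_fderivWithin_eq_zero (𝕜 := ℝ) (f := f)
    (fun x hx => (h x hx).differentiableAt.differentiableWithinAt)
    (fun x hx => by
      have h1 := (h x hx).hasFDerivAt.hasFDerivWithinAt (s := Ioi 0)
      rw [h1.fderivWithin (isOpen_Ioi.uniqueDiffWithinAt hx)]
      ext; simp) (x := t) (y := 1) ht (by simp)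
  exact this

lemma gig_integrate (r : ℝ → ℝ) (m p q : ℝ)
    (hd : ∀ t : ℝ, 0 < t → DifferentiableAt ℝ r t)
    (h : ∀ t : ℝ, 0 < t → t ^ 2 * deriv r t = m * t - p * t ^ 2 + q) :
    ∃ b, ∀ t : ℝ, 0 < t → r t = m * Real.log t - p * t - q / t + b := by
  obtain ⟨b, hb⟩ := gig_const (fun t => r t - (m * Real.log t - p * t - q * t⁻¹)) (by
    intro t ht
    have h1 := (hd t ht).hasDerivAt.sub
      ((((Real.hasDerivAt_log ht.ne').const_mul m).sub ((hasDerivAt_id t).const_mul p)).sub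
        ((hasDerivAt_inv ht.ne').const_mul q))
    refine h1.congr_deriv ?_
    have h2 := h t ht
    have h3 : deriv r t = (m * t - p * t ^ 2 + q) / t ^ 2 := by
      rw [← h2]; field_simp
    rw [h3]; field_simp; ring)
  refine ⟨b, fun t ht => ?_⟩
  have := hb t ht
  rw [div_eq_mul_inv]; linarith

lemma gig_poly (a b c d e : ℝ)
    (h : ∀ u : ℝ, 0 < u → a + b * u + c * u ^ 2 + d * u ^ 3 + e * u ^ 4 = 0) :
    a = 0 ∧ b = 0 ∧ c = 0 ∧ d = 0 ∧ e = 0 := by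
  have h1 := h 1 (by norm_num)
  have h2 := h 2 (by norm_num)
  have h3 := h 3 (by norm_num)
  have h4 := h 4 (by norm_num)
  have h5 := h 5 (by norm_num)
  refine ⟨?_, ?_, ?_, ?_, ?_⟩ <;> linarith

lemma gig_interp (P0 P1 P2 Q0 Q1 Q2 : ℝ → ℝ)
    (h : ∀ u v : ℝ, 0 < u → 0 < v →
      P0 u + P1 u * v + P2 u * v ^ 2 = Q0 v + Q1 v * u + Q2 v * u ^ 2) :
    ∃ a00 a10 a20 a01 a11 a21 a02 a12 a22 : ℝ,
      (∀ u : ℝ, 0 < u → P0 u = a00 + a10 * u + a20 * u ^ 2 ∧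
        P1 u = a01 + a11 * u + a21 * u ^ 2 ∧ P2 u = a02 + a12 * u + a22 * u ^ 2) ∧
      (∀ v : ℝ, 0 < v → Q0 v = a00 + a01 * v + a02 * v ^ 2 ∧
        Q1 v = a10 + a11 * v + a12 * v ^ 2 ∧ Q2 v = a20 + a21 * v + a22 * v ^ 2) := by
  have hP : ∀ u : ℝ, 0 < u →
      P0 u = (3 * Q0 1 - 3 * Q0 2 + Q0 3) + (3 * Q1 1 - 3 * Q1 2 + Q1 3) * u
        + (3 * Q2 1 - 3 * Q2 2 + Q2 3) * u ^ 2 ∧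
      P1 u = (-5/2 * Q0 1 + 4 * Q0 2 - 3/2 * Q0 3) + (-5/2 * Q1 1 + 4 * Q1 2 - 3/2 * Q1 3) * u
        + (-5/2 * Q2 1 + 4 * Q2 2 - 3/2 * Q2 3) * u ^ 2 ∧
      P2 u = (1/2 * Q0 1 - Q0 2 + 1/2 * Q0 3) + (1/2 * Q1 1 - Q1 2 + 1/2 * Q1 3) * u
        + (1/2 * Q2 1 - Q2 2 + 1/2 * Q2 3) * u ^ 2 := by
    intro u hu
    have h1 := h u 1 hu (by norm_num)
    have h2 := h u 2 hu (by norm_num)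
    have h3 := h u 3 hu (by norm_num)
    refine ⟨?_, ?_, ?_⟩
    · linear_combination 3 * h1 - 3 * h2 + h3
    · linear_combination -5/2 * h1 + 4 * h2 - 3/2 * h3
    · linear_combination 1/2 * h1 - h2 + 1/2 * h3
  refine ⟨_, _, _, _, _, _, _, _, _, hP, ?_⟩
  intro v hv
  have key := fun u : ℝ => fun hu : 0 < u => h u v hu hv
  obtain ⟨p1, p2, p3⟩ := hP 1 (by norm_num)
  obtain ⟨q1, q2, q3⟩ := hP 2 (by norm_num)
  obtain ⟨r1, r2, r3⟩ := hP 3 (by norm_num)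
  have k1 := key 1 (by norm_num)
  have k2 := key 2 (by norm_num)
  have k3 := key 3 (by norm_num)
  rw [p1, p2, p3] at k1
  rw [q1, q2, q3] at k2
  rw [r1, r2, r3] at k3
  refine ⟨?_, ?_, ?_⟩
  · linear_combination -(3 * k1 - 3 * k2 + k3)
  · linear_combination -(-5/2 * k1 + 4 * k2 - 3/2 * k3)
  · linear_combination -(1/2 * k1 - k2 + 1/2 * k3)

/-- Degenerate case `α = 0`. -/
lemma gig_degenerate (β : ℝ) (hβ : β ≠ 0) (rU rV : ℝ → ℝ)
    (hV : ∀ t : ℝ, 0 < t → DifferentiableAt ℝ (deriv rV) t)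
    (heq : ∀ u v : ℝ, 0 < u → 0 < v →
      (1 + 2 * β * u * v) * u ^ 2 * deriv (deriv rU) u +
          (1 + β * u * v) * (2 * u) * deriv rU u =
        v ^ 2 * deriv (deriv rV) v + (2 * v) * deriv rV v) :
    ∃ m c₁ c₂ : ℝ,
      (∀ u : ℝ, 0 < u → u ^ 2 * deriv rU u = m * u - 0 * u ^ 2 + c₁) ∧
      (∀ v : ℝ, 0 < v → v ^ 2 * deriv rV v = m * v - c₁ * β * v ^ 2 + c₂) := by
  obtain ⟨a00, a10, a20, a01, a11, a21, a02, a12, a22, hP, hQ⟩ := gig_interp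
    (fun u => u ^ 2 * deriv (deriv rU) u + 2 * u * deriv rU u)
    (fun u => β * u * (2 * (u ^ 2 * deriv (deriv rU) u) + 2 * u * deriv rU u))
    (fun _ => 0)
    (fun v => v ^ 2 * deriv (deriv rV) v + 2 * v * deriv rV v) (fun _ => 0) (fun _ => 0)
    (by intro u v hu hv; linear_combination heq u v hu hv)
  obtain ⟨e1, e2, e3, -, -⟩ := gig_poly a10 a11 a12 0 0
    (fun v hv => by linear_combination -(hQ v hv).2.1)
  obtain ⟨e4, e5, e6, -, -⟩ := gig_poly a20 a21 a22 0 0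
    (fun v hv => by linear_combination -(hQ v hv).2.2)
  obtain ⟨e7, -, -, -, -⟩ := gig_poly a02 a12 a22 0 0
    (fun v hv => by linear_combination -(hP v hv).2.2)
  subst e1 e2 e3 e4 e5 e6 e7
  obtain ⟨c₂, hc⟩ := gig_const
    (fun v => v ^ 2 * deriv rV v - (a00 * v + a01 / 2 * v ^ 2)) (by
    intro v hv
    have h1 := ((hasDerivAt_pow 2 v).mul (hV v hv).hasDerivAt).sub
      (((hasDerivAt_id v).const_mul a00).add ((hasDerivAt_pow 2 v).const_mul (a01 / 2)))
    refine h1.congr_deriv ?_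
    have := (hQ v hv).1
    simp
    linear_combination this)
  refine ⟨a00, -a01 / (2 * β), c₂, fun u hu => ?_, fun v hv => ?_⟩
  · obtain ⟨h0, h1, -⟩ := hP u hu
    field_simp
    linear_combination 2 * β * u * h0 - h1
  · have := hc v hv
    field_simp
    linear_combination 2 * this

lemma gig_main_case (α β : ℝ) (hα : α ≠ 0) (hβ : β ≠ 0) (hαβ : α ≠ β) (rU rV : ℝ → ℝ)
    (heq : ∀ u v : ℝ, 0 < u → 0 < v →
      (1 + 2 * β * u * v + α * β * u ^ 2 * v ^ 2) * u ^ 2 * deriv (deriv rU) u +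
          (1 + β * u * v) * (2 * u) * deriv rU u =
        (1 + 2 * α * u * v + α * β * u ^ 2 * v ^ 2) * v ^ 2 * deriv (deriv rV) v +
          (1 + α * u * v) * (2 * v) * deriv rV v) :
    ∃ m c₁ c₂ : ℝ,
      (∀ u : ℝ, 0 < u → u ^ 2 * deriv rU u = m * u - c₂ * α * u ^ 2 + c₁) ∧
      (∀ v : ℝ, 0 < v → v ^ 2 * deriv rV v = m * v - c₁ * β * v ^ 2 + c₂) := by
  obtain ⟨a00, a10, a20, a01, a11, a21, a02, a12, a22, hP, hQ⟩ := gig_interp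
    (fun u => u ^ 2 * deriv (deriv rU) u + 2 * u * deriv rU u)
    (fun u => β * u * (2 * (u ^ 2 * deriv (deriv rU) u) + 2 * u * deriv rU u))
    (fun u => α * β * u ^ 2 * (u ^ 2 * deriv (deriv rU) u))
    (fun v => v ^ 2 * deriv (deriv rV) v + 2 * v * deriv rV v)
    (fun v => α * v * (2 * (v ^ 2 * deriv (deriv rV) v) + 2 * v * deriv rV v))
    (fun v => α * β * v ^ 2 * (v ^ 2 * deriv (deriv rV) v))
    (by intro u v hu hv; linear_combination heq u v hu hv)
  obtain ⟨e1, e2, e3, e4, e5⟩ := gig_poly (-a02) (α * a01 - a12)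
    (α * a11 - α * β * a00 - a22) (α * a21 - α * β * a10) (-(α * β * a20))
    (fun u hu => by
      obtain ⟨h0, h1, h2⟩ := hP u hu
      linear_combination -α * u * h1 + α * β * u ^ 2 * h0 + h2)
  obtain ⟨d1, d2, d3, d4, d5⟩ := gig_poly (-a20) (β * a10 - a21)
    (β * a11 - α * β * a00 - a22) (β * a12 - α * β * a01) (-(α * β * a02))
    (fun u hu => by
      obtain ⟨h0, h1, h2⟩ := hQ u hu
      linear_combination -β * u * h1 + α * β * u ^ 2 * h0 + h2)
  have f11 : a11 = 0 := by
    have : (α - β) * a11 = 0 := by linear_combination e3 - d3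
    exact (mul_eq_zero.mp this).resolve_left (sub_ne_zero.mpr hαβ)
  have f02 : a02 = 0 := by linarith
  have f20 : a20 = 0 := by linarith
  subst f11 f02 f20
  refine ⟨a00, -a01 / (2 * β), -a10 / (2 * α), fun u hu => ?_, fun v hv => ?_⟩
  · obtain ⟨h0, h1, -⟩ := hP u hu
    field_simp
    linear_combination 2 * β * u * h0 - h1 + u ^ 2 * d2
  · obtain ⟨h0, h1, -⟩ := hQ v hv
    field_simp
    linear_combination 2 * α * v * h0 - h1 + v ^ 2 * e2


theorem gig_separated_functional_equation
    (α β : ℝ) (hα : 0 ≤ α) (hβ : 0 ≤ β) (hαβ : α ≠ β)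
    (rU rV : ℝ → ℝ)
    (hU : ∀ t ∈ Ioi (0 : ℝ), DifferentiableAt ℝ rU t ∧ DifferentiableAt ℝ (deriv rU) t)
    (hV : ∀ t ∈ Ioi (0 : ℝ), DifferentiableAt ℝ rV t ∧ DifferentiableAt ℝ (deriv rV) t)
    (heq : ∀ u v : ℝ, 0 < u → 0 < v →
      (1 + 2 * β * u * v + α * β * u ^ 2 * v ^ 2) * u ^ 2 * deriv (deriv rU) u +
          (1 + β * u * v) * (2 * u) * deriv rU u =
        (1 + 2 * α * u * v + α * β * u ^ 2 * v ^ 2) * v ^ 2 * deriv (deriv rV) v +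
          (1 + α * u * v) * (2 * v) * deriv rV v) :
    ∃ l c₁ c₂ b₂ b₃ : ℝ,
      (∀ u : ℝ, 0 < u →
        rU u = (l - 1) * Real.log u - c₂ * α * u - c₁ / u + b₂) ∧
      (∀ v : ℝ, 0 < v →
        rV v = (l - 1) * Real.log v - c₁ * β * v - c₂ / v + b₃) := by

  have key : ∃ m c₁ c₂ : ℝ,
      (∀ u : ℝ, 0 < u → u ^ 2 * deriv rU u = m * u - c₂ * α * u ^ 2 + c₁) ∧
      (∀ v : ℝ, 0 < v → v ^ 2 * deriv rV v = m * v - c₁ * β * v ^ 2 + c₂) := by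
    by_cases h1 : α = 0
    · subst h1
      obtain ⟨m, c₁, c₂, k1, k2⟩ := gig_degenerate β hαβ.symm rU rV (fun t ht => (hV t ht).2)
        (fun u v hu hv => by linear_combination heq u v hu hv)
      exact ⟨m, c₁, c₂, fun u hu => by rw [k1 u hu]; ring, k2⟩
    by_cases h2 : β = 0
    · subst h2
      obtain ⟨m, c₁, c₂, k1, k2⟩ := gig_degenerate α hαβ rV rU (fun t ht => (hU t ht).2)
        (fun u v hu hv => by linear_combination -heq v u hv hu)
      exact ⟨m, c₂, c₁, k2, fun u hu => by rw [k1 u hu]; ring⟩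
    exact gig_main_case α β h1 h2 hαβ rU rV heq
  obtain ⟨m, c₁, c₂, k1, k2⟩ := key
  obtain ⟨b₂, hb₂⟩ := gig_integrate rU m (c₂ * α) c₁ (fun t ht => (hU t ht).1) k1
  obtain ⟨b₃, hb₃⟩ := gig_integrate rV m (c₁ * β) c₂ (fun t ht => (hV t ht).1) k2
  refine ⟨m + 1, c₁, c₂, b₂, b₃, fun u hu => ?_, fun v hv => ?_⟩
  · rw [hb₂ u hu]; ring
  · rw [hb₃ v hv]; ring
end
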